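/- arXiv:2009.01580 — 2 statements merged into one kernel-verified Lean document; each statement's English description precedes it below -/
import Mathlib

section
/- Let n ≥ 4. A subset P ⊆ ℝ^n is an admissible polytope for G_{n,2} of affine dimension n−2 having nonempty intersection with the interior of Δ_{n,2} if and only if P = Δ_{n,2} ∩ {x ∈ ℝ^n : ∑_{i∈S} x_i = 1} for some subset S ⊆ {1,…,n} with 2 ≤ |S| ≤ ⌊n/2⌋. -/
/-- The hypersimplex `Δ_{n,k} ⊂ ℝ^n`. -/
def hypersimplex (n k : ℕ) : Set (Fin n → ℝ) :=
  {x | (∀ i, 0 ≤ x i ∧ x i ≤ 1) ∧ ∑ i, x i = (k : ℝ)}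

/-- The Plücker coordinate `P^{ij}(A) = A_{i1}A_{j2} − A_{j1}A_{i2}` of an
n×2 complex matrix. -/
def plucker {n : ℕ} (A : Matrix (Fin n) (Fin 2) ℂ) (i j : Fin n) : ℂ :=
  A i 0 * A j 1 - A j 0 * A i 1

/-- The Plücker support `σ(A) = {{i,j} : P^{ij}(A) ≠ 0}` of an n×2 matrix. -/
def pluckerSupport {n : ℕ} (A : Matrix (Fin n) (Fin 2) ℂ) : Set (Finset (Fin n)) :=
  {p | ∃ i j : Fin n, i ≠ j ∧ p = {i, j} ∧ plucker A i j ≠ 0}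

/-- A set `σ` of 2-element subsets of `{1,…,n}` is admissible for `G_{n,2}`
if it is the Plücker support of some rank-2 complex n×2 matrix. -/
def IsAdmissible {n : ℕ} (σ : Set (Finset (Fin n))) : Prop :=
  ∃ A : Matrix (Fin n) (Fin 2) ℂ, A.rank = 2 ∧ pluckerSupport A = σ

/-- The 0/1 vertex `Λ_p = ∑_{i∈p} e_i` of the hypersimplex associated with a
subset `p` of indices. -/
def vertexOf {n : ℕ} (p : Finset (Fin n)) : Fin n → ℝ :=
  fun i => if i ∈ p then 1 else 0

/-- The admissible polytope `P_σ = conv{e_i + e_j : {i,j} ∈ σ}`. -/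
def admPolytope {n : ℕ} (σ : Set (Finset (Fin n))) : Set (Fin n → ℝ) :=
  convexHull ℝ (vertexOf '' σ)

/-!
All coordinates of an interior point of the hypersimplex are positive, which forces the rows of a
representing matrix `A` to be nonzero, so that vanishing of the Plücker coordinates is an
equivalence relation on the rows and the Plücker support is a complete multipartite graph. If there
are at least three classes, any two vertices `i`, `j` of this graph have a common neighbour `k`,
and `(e_i + e_k) - (e_j + e_k) = e_i - e_j` shows that the polytope has dimension `n - 1`. Hence
dimension `n - 2` means that the graph is complete bipartite with parts `S` and `Sᶜ`. Its polytope
is the slice `∑_{i ∈ S} x_i = 1`, because a point of the slice is the convex combination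
`∑_{s ∈ S, t ∉ S} x_s x_t (e_s + e_t)`. The slice meets the interior exactly when both parts have
at least two elements, and exchanging `S` and `Sᶜ` gives `|S| ≤ n / 2`.
-/

section LinearAlgebra

variable {K V W ι : Type*} [DivisionRing K] [AddCommGroup V] [Module K V] [AddCommGroup W]
  [Module K W]

theorem direction_affineSpan_le_ker {s : Set V} {f : V →ₗ[K] W} {c : W} (h : ∀ x ∈ s, f x = c) :
    (affineSpan K s).direction ≤ LinearMap.ker f := by
  rw [direction_affineSpan, vectorSpan_def, Submodule.span_le]
  rintro _ ⟨x, hx, y, hy, rfl⟩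
  simp [h x hx, h y hy]

theorem finrank_le_finrank_add_card [Module.Finite K V] {v : ι → V}
    (hv : Submodule.span K (Set.range v) = ⊤) (D : Submodule K V) (F : Finset ι)
    (h : ∀ i, ∃ j ∈ F, v i - v j ∈ D) :
    Module.finrank K V ≤ Module.finrank K D + F.card := by
  classical
  let E := Submodule.span K (F.image v : Set V)
  have hE : Module.finrank K E ≤ F.card :=
    (finrank_span_finset_le_card _).trans Finset.card_image_le
  have hDE : D ⊔ E = ⊤ := by
    rw [eq_top_iff, ← hv, Submodule.span_le]
    rintro _ ⟨i, rfl⟩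
    obtain ⟨j, hj, hij⟩ := h i
    rw [← sub_add_cancel (v i) (v j)]
    exact Submodule.add_mem_sup hij (Submodule.subset_span (Finset.mem_image_of_mem v hj))
  calc Module.finrank K V = Module.finrank K ↥(D ⊔ E) := by rw [hDE, finrank_top]
    _ ≤ Module.finrank K D + Module.finrank K E :=
      Submodule.finrank_add_le_finrank_add_finrank D E
    _ ≤ Module.finrank K D + F.card := by gcongr

end LinearAlgebra

theorem exists_pos_lineMap_neg_mem_of_mem_intrinsicInterior {E : Type*} [AddCommGroup E]
    [Module ℝ E] [TopologicalSpace E] [IsTopologicalAddGroup E] [ContinuousSMul ℝ E] {s : Set E}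
    {x y : E} (hx : x ∈ intrinsicInterior ℝ s) (hy : y ∈ affineSpan ℝ s) :
    ∃ ε > 0, AffineMap.lineMap x y (-ε : ℝ) ∈ s := by
  obtain ⟨x, hx, rfl⟩ := hx
  let f : ℝ → affineSpan ℝ s := fun t ↦
    ⟨AffineMap.lineMap (x : E) y (-t), AffineMap.lineMap_mem (-t) x.2 hy⟩
  have hf : Continuous f :=
    Continuous.subtype_mk (AffineMap.lineMap_continuous.comp continuous_neg) _
  have hf0 : f 0 = x := by ext; simp [f]
  have hmem : ∀ᶠ t in nhds (0 : ℝ), (f t : E) ∈ s :=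
    hf.continuousAt.eventually_mem (hf0 ▸ mem_interior_iff_mem_nhds.1 hx)
  obtain ⟨ε, hεs, hε⟩ :=
    ((hmem.filter_mono nhdsWithin_le_nhds).and (self_mem_nhdsWithin (s := Set.Ioi 0))).exists
  exact ⟨ε, hε, hεs⟩

theorem one_lt_card_of_sum_eq_one {ι : Type*} {S : Finset ι} {x : ι → ℝ} (hx : ∀ i ∈ S, x i < 1)
    (hS : ∑ i ∈ S, x i = 1) : 1 < S.card := by
  have hne : S.Nonempty := Finset.nonempty_of_sum_ne_zero (hS ▸ one_ne_zero)
  have hlt : ∑ i ∈ S, x i < ∑ _i ∈ S, 1 := Finset.sum_lt_sum_of_nonempty hne hx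
  rw [hS, Finset.sum_const, nsmul_one] at hlt
  exact_mod_cast hlt

theorem finset_pair_eq_pair_iff {α : Type*} [DecidableEq α] {a b c d : α} :
    ({a, b} : Finset α) = {c, d} ↔ a = c ∧ b = d ∨ a = d ∧ b = c := by
  rw [← Finset.coe_inj, Finset.coe_pair, Finset.coe_pair, Set.pair_eq_pair_iff]

theorem convex_setOf_sum_eq {ι : Type*} (S : Finset ι) (c : ℝ) :
    Convex ℝ {x : ι → ℝ | ∑ i ∈ S, x i = c} :=
  convex_hyperplane (.mk (by simp [Finset.sum_add_distrib]) (by simp [Finset.mul_sum])) c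

section Hypersimplex

variable {n k : ℕ}

theorem convex_hypersimplex : Convex ℝ (hypersimplex n k) := by
  have hbox : Convex ℝ {x : Fin n → ℝ | ∀ i, 0 ≤ x i ∧ x i ≤ 1} := by
    simpa [Set.pi] using convex_pi (s := Set.univ) fun (_ : Fin n) _ ↦ convex_Icc (0 : ℝ) 1
  exact hbox.inter (convex_setOf_sum_eq _ _)

theorem sum_eq_of_mem_affineSpan_hypersimplex {x : Fin n → ℝ}
    (hx : x ∈ affineSpan ℝ (hypersimplex n k)) : ∑ i, x i = k := by
  let f : (Fin n → ℝ) →ₗ[ℝ] ℝ := ∑ i, LinearMap.proj i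
  have hf : (hypersimplex n k).EqOn f.toAffineMap (AffineMap.const ℝ _ (k : ℝ)) := fun y hy ↦ by
    simpa [f] using hy.2
  simpa [f] using AffineMap.eqOn_affineSpan hf hx

theorem pos_and_lt_one_of_mem_intrinsicInterior_hypersimplex (hk : 0 < k) (hkn : k < n)
    {x : Fin n → ℝ} (hx : x ∈ intrinsicInterior ℝ (hypersimplex n k)) (i : Fin n) :
    0 < x i ∧ x i < 1 := by
  have hn : (0 : ℝ) < n := by exact_mod_cast hk.trans hkn
  have hc0 : (0 : ℝ) < k / n := div_pos (by exact_mod_cast hk) hn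
  have hc1 : (k / n : ℝ) < 1 := (div_lt_one hn).2 (by exact_mod_cast hkn)
  have hc : (fun _ ↦ k / n : Fin n → ℝ) ∈ hypersimplex n k :=
    ⟨fun _ ↦ ⟨hc0.le, hc1.le⟩, by simp [mul_div_cancel₀ _ hn.ne']⟩
  obtain ⟨ε, hε, hmem⟩ := exists_pos_lineMap_neg_mem_of_mem_intrinsicInterior hx
    (subset_affineSpan ℝ _ hc)
  have hi := hmem.1 i
  simp only [AffineMap.lineMap_apply, vsub_eq_sub, vadd_eq_add, Pi.add_apply, Pi.smul_apply,
    Pi.sub_apply, smul_eq_mul] at hi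
  have hlower : ε * (k / n) ≤ (1 + ε) * x i := by linarith [hi.1]
  have hupper : ε * (1 - k / n) ≤ (1 + ε) * (1 - x i) := by linarith [hi.2]
  have hε1 : 0 < 1 + ε := by positivity
  exact ⟨(mul_pos_iff_of_pos_left hε1).1 ((mul_pos hε hc0).trans_le hlower),
    sub_pos.1 ((mul_pos_iff_of_pos_left hε1).1 ((mul_pos hε (sub_pos.2 hc1)).trans_le hupper))⟩

theorem mem_intrinsicInterior_hypersimplex {x : Fin n → ℝ} (hx : ∀ i, 0 < x i ∧ x i < 1)
    (hsum : ∑ i, x i = k) : x ∈ intrinsicInterior ℝ (hypersimplex n k) := by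
  have hxΔ : x ∈ hypersimplex n k := ⟨fun i ↦ ⟨(hx i).1.le, (hx i).2.le⟩, hsum⟩
  let U : Set (affineSpan ℝ (hypersimplex n k)) := {y | ∀ i, 0 < y.1 i ∧ y.1 i < 1}
  have hU : IsOpen U := by
    simp only [U, Set.ofPred_forall]
    refine isOpen_iInter_of_finite fun i ↦ ?_
    have hcoord : Continuous fun y : affineSpan ℝ (hypersimplex n k) ↦ y.1 i :=
      (continuous_apply i).comp continuous_subtype_val
    exact (isOpen_lt continuous_const hcoord).inter (isOpen_lt hcoord continuous_const)
  have hUΔ : U ⊆ (↑) ⁻¹' hypersimplex n k := fun y hy ↦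
    ⟨fun i ↦ ⟨(hy i).1.le, (hy i).2.le⟩, sum_eq_of_mem_affineSpan_hypersimplex y.2⟩
  exact ⟨⟨x, subset_affineSpan ℝ _ hxΔ⟩, interior_maximal hUΔ hU hx, rfl⟩

theorem sum_compl_eq_one {S : Finset (Fin n)} {x : Fin n → ℝ} (hx : x ∈ hypersimplex n 2)
    (hS : ∑ i ∈ S, x i = 1) : ∑ i ∈ Sᶜ, x i = 1 := by
  have htotal : ∑ i, x i = 2 := by exact_mod_cast hx.2
  linarith [Finset.sum_add_sum_compl S x]

end Hypersimplex

section Vertices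

variable {n : ℕ}

theorem vertexOf_pair {s t : Fin n} (h : s ≠ t) :
    vertexOf {s, t} = Pi.single s 1 + Pi.single t 1 := by
  ext i
  by_cases hi : i = s
  · simp [vertexOf, hi, h]
  · simp [vertexOf, hi, Pi.single_apply]

theorem sum_vertexOf (S p : Finset (Fin n)) : ∑ i ∈ S, vertexOf p i = (S ∩ p).card := by
  simp [vertexOf]

theorem vertexOf_mem_hypersimplex {k : ℕ} {p : Finset (Fin n)} (hp : p.card = k) :
    vertexOf p ∈ hypersimplex n k := by
  refine ⟨fun i ↦ ?_, by rw [sum_vertexOf, Finset.univ_inter, hp]⟩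
  unfold vertexOf
  split_ifs <;> norm_num

theorem sum_mul_smul_vertexOf_pair {S : Finset (Fin n)} {x : Fin n → ℝ}
    (hS : ∑ i ∈ S, x i = 1) (hSc : ∑ i ∈ Sᶜ, x i = 1) :
    ∑ p ∈ S ×ˢ Sᶜ, (x p.1 * x p.2) • vertexOf {p.1, p.2} = x := by
  have hvertex : ∀ s ∈ S, ∀ t ∈ Sᶜ, (x s * x t) • vertexOf {s, t} =
      x t • Pi.single s (x s) + x s • Pi.single t (x t) := fun s hs t ht ↦ by
    have hst : s ≠ t := fun h ↦ Finset.mem_compl.1 ht (h ▸ hs)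
    simp [vertexOf_pair hst, ← Pi.single_smul, mul_comm]
  calc ∑ p ∈ S ×ˢ Sᶜ, (x p.1 * x p.2) • vertexOf {p.1, p.2}
      = ∑ s ∈ S, ∑ t ∈ Sᶜ, (x t • Pi.single s (x s) + x s • Pi.single t (x t)) := by
        rw [Finset.sum_product]
        exact Finset.sum_congr rfl fun s hs ↦ Finset.sum_congr rfl (hvertex s hs)
    _ = ∑ s ∈ S, Pi.single s (x s) + ∑ t ∈ Sᶜ, Pi.single t (x t) := by
        simp only [Finset.sum_add_distrib, ← Finset.sum_smul, ← Finset.smul_sum, hS, hSc, one_smul]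
    _ = x := by rw [Finset.sum_add_sum_compl, Finset.univ_sum_single]

theorem vertexOf_mem_admPolytope {σ : Set (Finset (Fin n))} {p : Finset (Fin n)} (hp : p ∈ σ) :
    vertexOf p ∈ admPolytope σ :=
  subset_convexHull ℝ _ (Set.mem_image_of_mem vertexOf hp)

theorem exists_mem_of_mem_admPolytope {σ : Set (Finset (Fin n))} {x : Fin n → ℝ}
    (hx : x ∈ admPolytope σ) {i : Fin n} (hi : x i ≠ 0) : ∃ p ∈ σ, i ∈ p := by
  by_contra! h
  have hsub : admPolytope σ ⊆ {y | y i = 0} := by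
    refine convexHull_min ?_ (convex_hyperplane (LinearMap.proj i).isLinear 0)
    rintro _ ⟨p, hp, rfl⟩
    exact if_neg (h p hp)
  exact hi (hsub hx)

theorem le_finrank_direction_admPolytope_add_card {σ : Set (Finset (Fin n))} (F : Finset (Fin n))
    (h : ∀ i, ∃ j ∈ F, ∃ k, i ≠ k ∧ j ≠ k ∧ {i, k} ∈ σ ∧ {j, k} ∈ σ) :
    n ≤ Module.finrank ℝ (affineSpan ℝ (admPolytope σ)).direction + F.card := by
  have hspan : Submodule.span ℝ (Set.range fun i : Fin n ↦ (Pi.single i 1 : Fin n → ℝ)) = ⊤ := by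
    rw [← (Pi.basisFun ℝ (Fin n)).span_eq, funext (Pi.basisFun_apply ℝ (Fin n))]
  suffices hdir : ∀ i, ∃ j ∈ F, (Pi.single i 1 - Pi.single j 1 : Fin n → ℝ) ∈
      (affineSpan ℝ (admPolytope σ)).direction by
    simpa using finrank_le_finrank_add_card
      (v := fun i : Fin n ↦ Pi.single i 1) hspan _ F hdir
  intro i
  obtain ⟨j, hj, k, hik, hjk, hi, hj'⟩ := h i
  have hmem : ∀ p ∈ σ, vertexOf p ∈ affineSpan ℝ (admPolytope σ) := fun p hp ↦
    subset_affineSpan ℝ _ (vertexOf_mem_admPolytope hp)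
  refine ⟨j, hj, ?_⟩
  simpa [vertexOf_pair hik, vertexOf_pair hjk] using
    AffineSubspace.vsub_mem_direction (hmem _ hi) (hmem _ hj')

end Vertices

section CutEdges

variable {n : ℕ}

/-- The edges of the complete bipartite graph with parts `S` and `Sᶜ`, as two-element subsets: the
Plücker support of a matrix whose rows fall into two proportionality classes, `S` and `Sᶜ`. -/
def cutEdges (S : Finset (Fin n)) : Set (Finset (Fin n)) :=
  {p | ∃ s ∈ S, ∃ t ∉ S, p = {s, t}}

variable {S : Finset (Fin n)}

theorem pair_mem_cutEdges {i j : Fin n} : {i, j} ∈ cutEdges S ↔ ¬(i ∈ S ↔ j ∈ S) := by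
  constructor
  · rintro ⟨s, hs, t, ht, h⟩
    rcases finset_pair_eq_pair_iff.1 h with ⟨rfl, rfl⟩ | ⟨rfl, rfl⟩ <;> simp [hs, ht]
  · intro h
    by_cases hi : i ∈ S
    · exact ⟨i, hi, j, by simpa [hi] using h, rfl⟩
    · exact ⟨j, by simpa [hi] using h, i, hi, Finset.pair_comm i j⟩

theorem cutEdges_compl (S : Finset (Fin n)) : cutEdges Sᶜ = cutEdges S := by
  ext p
  constructor <;> rintro ⟨s, hs, t, ht, rfl⟩ <;> simp_all [pair_mem_cutEdges]

theorem admPolytope_cutEdges (S : Finset (Fin n)) :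
    admPolytope (cutEdges S) = hypersimplex n 2 ∩ {x | ∑ i ∈ S, x i = 1} := by
  apply Set.Subset.antisymm
  · refine convexHull_min ?_ (convex_hypersimplex.inter (convex_setOf_sum_eq S 1))
    rintro _ ⟨_, ⟨s, hs, t, ht, rfl⟩, rfl⟩
    have hst : s ≠ t := fun h ↦ ht (h ▸ hs)
    refine ⟨vertexOf_mem_hypersimplex (Finset.card_pair hst), ?_⟩
    simp [sum_vertexOf, Finset.inter_insert_of_mem hs, Finset.inter_singleton_of_notMem ht]
  · rintro x ⟨hx, hS : ∑ i ∈ S, x i = 1⟩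
    have hSc := sum_compl_eq_one hx hS
    rw [← sum_mul_smul_vertexOf_pair hS hSc]
    refine (convex_convexHull ℝ _).sum_mem (fun p _ ↦ mul_nonneg (hx.1 _).1 (hx.1 _).1) ?_ ?_
    · rw [Finset.sum_product, ← Finset.sum_mul_sum, hS, hSc, one_mul]
    · intro p hp
      rw [Finset.mem_product, Finset.mem_compl] at hp
      exact vertexOf_mem_admPolytope ⟨p.1, hp.1, p.2, hp.2, rfl⟩

theorem finrank_direction_admPolytope_cutEdges_add_two_le (hS : S.Nonempty) (hSc : Sᶜ.Nonempty) :
    Module.finrank ℝ (affineSpan ℝ (admPolytope (cutEdges S))).direction + 2 ≤ n := by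
  obtain ⟨s, hs⟩ := hS
  obtain ⟨t, ht⟩ := hSc
  let φ : (Fin n → ℝ) →ₗ[ℝ] ℝ × ℝ :=
    (∑ i ∈ S, LinearMap.proj i).prod (∑ i ∈ Sᶜ, LinearMap.proj i)
  have hφ (x : Fin n → ℝ) : φ x = (∑ i ∈ S, x i, ∑ i ∈ Sᶜ, x i) := by simp [φ]
  have hker : (affineSpan ℝ (admPolytope (cutEdges S))).direction ≤ LinearMap.ker φ := by
    refine direction_affineSpan_le_ker (c := (1, 1)) fun x hx ↦ ?_
    obtain ⟨hx, hS⟩ := admPolytope_cutEdges S ▸ hx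
    exact (hφ x).trans (Prod.ext hS (sum_compl_eq_one hx hS))
  have hsurj : LinearMap.range φ = ⊤ := by
    refine LinearMap.range_eq_top.2 fun ⟨a, b⟩ ↦ ⟨Pi.single s a + Pi.single t b, ?_⟩
    rw [Finset.mem_compl] at ht
    simp [hφ, Finset.sum_add_distrib, Pi.single_apply, hs, ht]
  calc Module.finrank ℝ (affineSpan ℝ (admPolytope (cutEdges S))).direction + 2
      ≤ Module.finrank ℝ (LinearMap.ker φ) + 2 := by gcongr; exact Submodule.finrank_mono hker
    _ = Module.finrank ℝ (LinearMap.ker φ) + Module.finrank ℝ (LinearMap.range φ) := by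
        rw [hsurj, finrank_top, Module.finrank_prod, Module.finrank_self]
    _ = n := by rw [add_comm, LinearMap.finrank_range_add_finrank_ker, Module.finrank_fin_fun]

theorem finrank_direction_admPolytope_cutEdges (hS : S.Nonempty) (hSc : Sᶜ.Nonempty) :
    Module.finrank ℝ (affineSpan ℝ (admPolytope (cutEdges S))).direction = n - 2 := by
  have hle := finrank_direction_admPolytope_cutEdges_add_two_le hS hSc
  obtain ⟨s, hs⟩ := hS
  obtain ⟨t, ht⟩ := hSc
  rw [Finset.mem_compl] at ht
  have hst : s ≠ t := fun h ↦ ht (h ▸ hs)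
  have hge := le_finrank_direction_admPolytope_add_card (σ := cutEdges S) {s, t} fun i ↦ by
    by_cases hi : i ∈ S
    · exact ⟨s, by simp, t, fun h ↦ ht (h ▸ hi), hst, by simp [pair_mem_cutEdges, hi, hs, ht]⟩
    · exact ⟨t, by simp, s, fun h ↦ hi (h ▸ hs), hst.symm, by simp [pair_mem_cutEdges, hi, hs, ht]⟩
  rw [Finset.card_pair hst] at hge
  omega

theorem admPolytope_cutEdges_inter_intrinsicInterior_nonempty_iff (hn : 2 < n) :
    (admPolytope (cutEdges S) ∩ intrinsicInterior ℝ (hypersimplex n 2)).Nonempty ↔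
      1 < S.card ∧ 1 < Sᶜ.card := by
  rw [admPolytope_cutEdges]
  constructor
  · rintro ⟨x, ⟨hxΔ, hS⟩, hxint⟩
    have hx := pos_and_lt_one_of_mem_intrinsicInterior_hypersimplex two_pos hn hxint
    exact ⟨one_lt_card_of_sum_eq_one (fun i _ ↦ (hx i).2) hS,
      one_lt_card_of_sum_eq_one (fun i _ ↦ (hx i).2) (sum_compl_eq_one hxΔ hS)⟩
  · rintro ⟨hS, hSc⟩
    let x : Fin n → ℝ := fun i ↦ if i ∈ S then (S.card : ℝ)⁻¹ else (Sᶜ.card : ℝ)⁻¹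
    have hx (i : Fin n) : 0 < x i ∧ x i < 1 := by
      have hpos_lt {m : ℕ} (hm : 1 < m) : 0 < (m : ℝ)⁻¹ ∧ (m : ℝ)⁻¹ < 1 :=
        ⟨by positivity, inv_lt_one_of_one_lt₀ (by exact_mod_cast hm)⟩
      by_cases hi : i ∈ S
      · simpa only [x, if_pos hi] using hpos_lt hS
      · simpa only [x, if_neg hi] using hpos_lt hSc
    have hsum : ∑ i ∈ S, x i = 1 := by
      rw [Finset.sum_congr rfl fun i hi ↦ if_pos hi, Finset.sum_const, nsmul_eq_mul,
        mul_inv_cancel₀ (by positivity)]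
    have hsumc : ∑ i ∈ Sᶜ, x i = 1 := by
      rw [Finset.sum_congr rfl fun i hi ↦ if_neg (Finset.mem_compl.1 hi), Finset.sum_const,
        nsmul_eq_mul, mul_inv_cancel₀ (by positivity)]
    have hxint : x ∈ intrinsicInterior ℝ (hypersimplex n 2) := by
      refine mem_intrinsicInterior_hypersimplex hx ?_
      rw [← Finset.sum_add_sum_compl S x, hsum, hsumc]
      norm_num
    exact ⟨x, ⟨intrinsicInterior_subset hxint, hsum⟩, hxint⟩

end CutEdges

section Plucker

variable {n : ℕ} {A : Matrix (Fin n) (Fin 2) ℂ}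

theorem plucker_swap (A : Matrix (Fin n) (Fin 2) ℂ) (i j : Fin n) :
    plucker A j i = -plucker A i j := by
  unfold plucker
  ring

theorem plucker_eq_zero_comm {i j : Fin n} : plucker A i j = 0 ↔ plucker A j i = 0 := by
  rw [plucker_swap A j i, neg_eq_zero]

theorem plucker_eq_zero_trans {a b c : Fin n} (hb : A b ≠ 0) (hab : plucker A a b = 0)
    (hbc : plucker A b c = 0) : plucker A a c = 0 := by
  obtain ⟨r, hr⟩ := Function.ne_iff.1 hb
  have hrel : A b r * plucker A a c = A a r * plucker A b c + A c r * plucker A a b := by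
    fin_cases r <;> simp only [plucker, Fin.zero_eta, Fin.mk_one] <;> ring
  rw [hab, hbc, mul_zero, mul_zero, add_zero] at hrel
  exact (mul_eq_zero.1 hrel).resolve_left hr

theorem rank_eq_two_of_plucker_ne_zero {i j : Fin n} (h : plucker A i j ≠ 0) : A.rank = 2 := by
  have hdet : (A.submatrix ![i, j] id).det = plucker A i j := by
    rw [Matrix.det_fin_two]
    simp [plucker, mul_comm]
  have hrank : (A.submatrix ![i, j] id).rank = 2 :=
    Matrix.rank_of_det_ne_zero (hdet ▸ h)
  exact A.rank_le_width.antisymm (hrank.symm.trans_le (A.rank_submatrix_le _ _))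

theorem pair_mem_pluckerSupport {i j : Fin n} :
    {i, j} ∈ pluckerSupport A ↔ plucker A i j ≠ 0 := by
  constructor
  · rintro ⟨a, b, -, hp, h⟩
    rcases finset_pair_eq_pair_iff.1 hp with ⟨rfl, rfl⟩ | ⟨rfl, rfl⟩
    · exact h
    · rwa [plucker_swap, neg_ne_zero]
  · intro h
    refine ⟨i, j, ?_, rfl, h⟩
    rintro rfl
    exact h (sub_self _)

theorem pluckerSupport_eq_cutEdges_iff {S : Finset (Fin n)} :
    pluckerSupport A = cutEdges S ↔ ∀ a b, plucker A a b = 0 ↔ (a ∈ S ↔ b ∈ S) := by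
  constructor
  · intro h a b
    rw [← not_iff_not, ← ne_eq, ← pair_mem_pluckerSupport, h, pair_mem_cutEdges]
  · intro h
    have hpair (a b : Fin n) : {a, b} ∈ pluckerSupport A ↔ {a, b} ∈ cutEdges S := by
      rw [pair_mem_pluckerSupport, pair_mem_cutEdges, ne_eq, h]
    ext p
    constructor
    · rintro ⟨a, b, -, rfl, hab⟩
      exact (hpair a b).1 (pair_mem_pluckerSupport.2 hab)
    · rintro ⟨a, ha, b, hb, rfl⟩
      exact (hpair a b).2 ⟨a, ha, b, hb, rfl⟩

theorem row_ne_zero_of_mem_admPolytope {x : Fin n → ℝ} (hx : x ∈ admPolytope (pluckerSupport A))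
    {i : Fin n} (hi : x i ≠ 0) : A i ≠ 0 := by
  obtain ⟨_, ⟨a, b, -, rfl, hab⟩, hip⟩ := exists_mem_of_mem_admPolytope hx hi
  intro hrow
  rcases Finset.mem_insert.1 hip with rfl | hib
  · simp [plucker, hrow] at hab
  · simp [plucker, ← Finset.mem_singleton.1 hib, hrow] at hab

theorem exists_pluckerSupport_eq_cutEdges_of_no_common_neighbor (hA : ∀ i, A i ≠ 0) {i j : Fin n}
    (hij : ∀ k, plucker A i k = 0 ∨ plucker A j k = 0) :
    ∃ S, pluckerSupport A = cutEdges S := by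
  classical
  refine ⟨Finset.univ.filter fun k ↦ plucker A i k = 0,
    pluckerSupport_eq_cutEdges_iff.2 fun a b ↦ ?_⟩
  simp only [Finset.mem_filter_univ]
  refine ⟨fun hab ↦ ⟨fun ha ↦ plucker_eq_zero_trans (hA a) ha hab,
    fun hb ↦ plucker_eq_zero_trans (hA b) hb (plucker_eq_zero_comm.1 hab)⟩, fun hab ↦ ?_⟩
  by_cases ha : plucker A i a = 0
  · exact plucker_eq_zero_trans (hA i) (plucker_eq_zero_comm.1 ha) (hab.1 ha)
  · have hja := (hij a).resolve_left ha
    have hjb := (hij b).resolve_left (mt hab.2 ha)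
    exact plucker_eq_zero_trans (hA j) (plucker_eq_zero_comm.1 hja) hjb

theorem exists_pluckerSupport_eq_cutEdges_of_finrank_lt (hA : ∀ i, A i ≠ 0)
    (hdim : Module.finrank ℝ (affineSpan ℝ (admPolytope (pluckerSupport A))).direction + 1 < n) :
    ∃ S, pluckerSupport A = cutEdges S := by
  by_contra hcut
  have hcommon (i j : Fin n) : ∃ k, plucker A i k ≠ 0 ∧ plucker A j k ≠ 0 := by
    by_contra! h
    exact hcut (exists_pluckerSupport_eq_cutEdges_of_no_common_neighbor hA
      fun k ↦ or_iff_not_imp_left.2 (h k))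
  have hne {i k : Fin n} (h : plucker A i k ≠ 0) : i ≠ k := by
    rintro rfl
    exact h (sub_self _)
  have hge := le_finrank_direction_admPolytope_add_card (σ := pluckerSupport A)
    {⟨0, by omega⟩} fun i ↦ by
      obtain ⟨k, hik, hjk⟩ := hcommon i ⟨0, by omega⟩
      exact ⟨_, Finset.mem_singleton_self _, k, hne hik, hne hjk, pair_mem_pluckerSupport.2 hik,
        pair_mem_pluckerSupport.2 hjk⟩
  rw [Finset.card_singleton] at hge
  omega

theorem isAdmissible_cutEdges {S : Finset (Fin n)} (hS : S.Nonempty) (hSc : Sᶜ.Nonempty) :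
    IsAdmissible (cutEdges S) := by
  obtain ⟨s, hs⟩ := hS
  obtain ⟨t, ht⟩ := hSc
  rw [Finset.mem_compl] at ht
  let A : Matrix (Fin n) (Fin 2) ℂ := .of fun i ↦ if i ∈ S then ![1, 0] else ![0, 1]
  have hA (a b : Fin n) : plucker A a b = 0 ↔ (a ∈ S ↔ b ∈ S) := by
    by_cases ha : a ∈ S <;> by_cases hb : b ∈ S <;> simp [plucker, A, ha, hb]
  have hst : plucker A s t ≠ 0 := by simp [hA, hs, ht]
  exact ⟨A, rank_eq_two_of_plucker_ne_zero hst, pluckerSupport_eq_cutEdges_iff.2 hA⟩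

end Plucker

/-- for n ≥ 4, a set P ⊆ ℝ^n is an admissible polytope for G_{n,2}
of affine dimension n−2 meeting the intrinsic interior of Δ_{n,2} iff
P = Δ_{n,2} ∩ {∑_{i∈S} x_i = 1} for some S with 2 ≤ |S| ≤ ⌊n/2⌋. -/
theorem stmt8 (n : ℕ) (hn : 4 ≤ n) (P : Set (Fin n → ℝ)) :
    (∃ σ : Set (Finset (Fin n)), IsAdmissible σ ∧ P = admPolytope σ ∧
      Module.finrank ℝ (affineSpan ℝ P).direction = n - 2 ∧
      (P ∩ intrinsicInterior ℝ (hypersimplex n 2)).Nonempty) ↔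
    (∃ S : Finset (Fin n), 2 ≤ S.card ∧ S.card ≤ n / 2 ∧
      P = hypersimplex n 2 ∩ {x | ∑ i ∈ S, x i = 1}) := by
  constructor
  · rintro ⟨σ, ⟨A, -, rfl⟩, rfl, hdim, hint⟩
    have hA (i : Fin n) : A i ≠ 0 := by
      obtain ⟨x, hxP, hxint⟩ := hint
      exact row_ne_zero_of_mem_admPolytope hxP
        (pos_and_lt_one_of_mem_intrinsicInterior_hypersimplex two_pos (by omega) hxint i).1.ne'
    obtain ⟨S, hS⟩ := exists_pluckerSupport_eq_cutEdges_of_finrank_lt hA (by omega)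
    rw [hS] at hint ⊢
    obtain ⟨hcard, hcardc⟩ :=
      (admPolytope_cutEdges_inter_intrinsicInterior_nonempty_iff (by omega)).1 hint
    by_cases hle : S.card ≤ n / 2
    · exact ⟨S, hcard, hle, admPolytope_cutEdges S⟩
    · have hlec : Sᶜ.card ≤ n / 2 := by rw [Finset.card_compl, Fintype.card_fin]; omega
      exact ⟨Sᶜ, hcardc, hlec, by rw [← cutEdges_compl, admPolytope_cutEdges]⟩
  · rintro ⟨S, hcard, hle, rfl⟩
    have hcardc : 1 < Sᶜ.card := by rw [Finset.card_compl, Fintype.card_fin]; omega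
    have hne : S.Nonempty := Finset.card_pos.1 (by omega)
    have hnec : Sᶜ.Nonempty := Finset.card_pos.1 (by omega)
    rw [← admPolytope_cutEdges]
    exact ⟨cutEdges S, isAdmissible_cutEdges hne hnec, rfl,
      finrank_direction_admPolytope_cutEdges hne hnec,
      (admPolytope_cutEdges_inter_intrinsicInterior_nonempty_iff (by omega)).2 ⟨hcard, hcardc⟩⟩
end

section
/- Let n ≥ 4 and let S, S' ⊆ {1,…,n} with 2 ≤ |S| ≤ n−2 and 2 ≤ |S'| ≤ n−2. Then Δ_{n,2} ∩ {x : ∑_{i∈S} x_i = 1} = Δ_{n,2} ∩ {x : ∑_{i∈S'} x_i = 1} if and only if S' = S or S' = {1,…,n}∖S. Consequently, for each p with 2 ≤ p < n/2 the number of distinct admissible polytopes of the form Δ_{n,2} ∩ {∑_{i∈S} x_i = 1} with |S| = p equals the binomial coefficient C(n,p), and for n even the number of such distinct polytopes with |S| = n/2 equals C(n, n/2)/2. -/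
/-!
On `Δ_{n,2}` the coordinates sum to `2`, so `∑_{i ∈ S} x_i = 1` and `∑_{i ∉ S} x_i = 1` are the same
condition. Conversely, the vertex `e_i + e_j` lies on the section cut out by `S` exactly when `S`
separates `i` from `j`, so the section determines the unordered bipartition `{S, Sᶜ}`. Hence
sending `S` to its section is injective on `p`-subsets if `2 * p ≠ n` and two-to-one if `2 * p = n`.
-/

open Finset

section BipartitionInvariant

variable {α β : Type*} [Fintype α]

theorem setOf_card_eq_coe_powersetCard (p : ℕ) :
    {S : Finset α | #S = p} = powersetCard p (univ : Finset α) := by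
  ext
  simp

variable [DecidableEq α]

theorem eq_or_eq_compl_of_forall_mem_iff_mem {S T : Finset α}
    (h : ∀ i j, (i ∈ S ↔ j ∈ S) ↔ (i ∈ T ↔ j ∈ T)) : T = S ∨ T = Sᶜ := by
  rcases isEmpty_or_nonempty α with _ | ⟨⟨i⟩⟩
  · exact .inl (Subsingleton.elim T S)
  by_cases hi : i ∈ S ↔ i ∈ T
  · refine .inl (Finset.ext fun j => ?_)
    have := h i j
    tauto
  · refine .inr (Finset.ext fun j => ?_)
    have := h i j
    rw [mem_compl]
    tauto

theorem ncard_image_card_eq_of_two_mul_ne {f : Finset α → β} {p : ℕ}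
    (hf : ∀ S T, f S = f T → T = S ∨ T = Sᶜ) (hp : 2 * p ≠ Fintype.card α) :
    (f '' {S | #S = p}).ncard = (Fintype.card α).choose p := by
  have f_injOn : Set.InjOn f {S | #S = p} := by
    intro S (hS : #S = p) T (hT : #T = p) hST
    rcases hf S T hST with rfl | rfl
    · rfl
    · have := card_add_card_compl S
      omega
  rw [f_injOn.ncard_image, setOf_card_eq_coe_powersetCard, Set.ncard_coe_finset,
    card_powersetCard, card_univ]

theorem two_mul_ncard_image_card_eq [Nonempty α] {f : Finset α → β} {p : ℕ}
    (hf : ∀ S T, f S = f T ↔ T = S ∨ T = Sᶜ) (hp : 2 * p = Fintype.card α) :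
    2 * (f '' {S | #S = p}).ncard = (Fintype.card α).choose p := by
  classical
  have fiber_eq {S : Finset α} (hS : #S = p) :
      {T ∈ powersetCard p (univ : Finset α) | f T = f S} = {S, Sᶜ} := by
    have card_compl_eq : #Sᶜ = p := by rw [card_compl]; omega
    ext T
    rw [mem_filter, mem_powersetCard_univ, mem_insert, mem_singleton, eq_comm (a := f T), hf]
    exact and_iff_right_of_imp (by rintro (rfl | rfl) <;> assumption)
  have card_fiber : ∀ b ∈ (powersetCard p univ).image f,
      #{T ∈ powersetCard p univ | f T = b} = 2 := by
    simp only [forall_mem_image, mem_powersetCard_univ]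
    intro S hS
    rw [fiber_eq hS, card_pair ne_compl_self]
  rw [setOf_card_eq_coe_powersetCard, ← coe_image, Set.ncard_coe_finset, mul_comm,
    ← sum_const_nat card_fiber, ← card_eq_sum_card_image, card_powersetCard, card_univ]

end BipartitionInvariant

theorem sum_indicator_one_eq_card_inter {α R : Type*} [DecidableEq α] [AddCommMonoidWithOne R]
    (A S : Finset α) : ∑ i ∈ S, (A : Set α).indicator (1 : α → R) i = #(A ∩ S) := by
  simp [Set.indicator_apply, inter_comm]

theorem indicator_mem_hypersimplex_iff {n k : ℕ} {A : Finset (Fin n)} :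
    (A : Set (Fin n)).indicator 1 ∈ hypersimplex n k ↔ #A = k := by
  have bounds (i : Fin n) : 0 ≤ (A : Set (Fin n)).indicator (1 : Fin n → ℝ) i ∧
      (A : Set (Fin n)).indicator (1 : Fin n → ℝ) i ≤ 1 := by
    by_cases hi : i ∈ A <;> simp [hi]
  rw [hypersimplex, Set.mem_ofPred_eq, and_iff_right bounds, sum_indicator_one_eq_card_inter,
    inter_univ, Nat.cast_inj]

/-- The polytope `Δ_{n,2} ∩ {∑_{i ∈ S} x_i = 1}`. -/
def hypersimplexSection (n : ℕ) (S : Finset (Fin n)) : Set (Fin n → ℝ) :=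
  hypersimplex n 2 ∩ {x | ∑ i ∈ S, x i = 1}

/-- The set of polytopes `Δ_{n,2} ∩ {∑_{i ∈ S} x_i = 1}` with `|S| = p`; being a set, it counts
each polytope once, however many `S` define it. -/
def hypersimplexSections (n p : ℕ) : Set (Set (Fin n → ℝ)) :=
  {P | ∃ S : Finset (Fin n), #S = p ∧ P = hypersimplexSection n S}

section Sections

variable {n : ℕ} {S T : Finset (Fin n)}

theorem hypersimplexSections_eq_image (n p : ℕ) :
    hypersimplexSections n p = hypersimplexSection n '' {S | #S = p} := by
  simp only [hypersimplexSections, Set.image, Set.mem_ofPred_eq, eq_comm]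

theorem hypersimplexSection_compl : hypersimplexSection n Sᶜ = hypersimplexSection n S := by
  ext x
  refine and_congr_right fun ⟨_, sum_eq_two⟩ => ?_
  have sum_add_sum_compl_eq := sum_add_sum_compl S x
  push_cast at sum_eq_two
  simp only [Set.mem_ofPred_eq]
  constructor <;> intro <;> linarith

theorem indicator_pair_mem_hypersimplexSection_iff {i j : Fin n} (hij : i ≠ j) :
    (({i, j} : Finset (Fin n)) : Set (Fin n)).indicator 1 ∈ hypersimplexSection n S ↔
      ¬(i ∈ S ↔ j ∈ S) := by
  have vertex_mem := indicator_mem_hypersimplex_iff.2 (card_pair hij)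
  rw [hypersimplexSection, Set.mem_inter_iff, and_iff_right vertex_mem, Set.mem_ofPred_eq,
    sum_indicator_one_eq_card_inter]
  by_cases hi : i ∈ S <;> by_cases hj : j ∈ S <;> simp [hi, hj, hij]

theorem hypersimplexSection_eq_iff :
    hypersimplexSection n S = hypersimplexSection n T ↔ T = S ∨ T = Sᶜ := by
  constructor
  · intro h
    refine eq_or_eq_compl_of_forall_mem_iff_mem fun i j => ?_
    rcases eq_or_ne i j with rfl | hij
    · simp only
    · rw [← not_iff_not, ← indicator_pair_mem_hypersimplexSection_iff hij, h,
        indicator_pair_mem_hypersimplexSection_iff hij]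
  · rintro (rfl | rfl)
    · rfl
    · exact hypersimplexSection_compl.symm

theorem ncard_hypersimplexSections_of_two_mul_ne {p : ℕ} (hp : 2 * p ≠ n) :
    (hypersimplexSections n p).ncard = n.choose p := by
  have := ncard_image_card_eq_of_two_mul_ne (fun _ _ => hypersimplexSection_eq_iff.1)
    (hp.trans_eq (Fintype.card_fin n).symm)
  rwa [Fintype.card_fin, ← hypersimplexSections_eq_image] at this

theorem two_mul_ncard_hypersimplexSections {p : ℕ} (hn : n ≠ 0) (hp : 2 * p = n) :
    2 * (hypersimplexSections n p).ncard = n.choose p := by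
  have : NeZero n := ⟨hn⟩
  have := two_mul_ncard_image_card_eq (fun _ _ => hypersimplexSection_eq_iff (n := n))
    (hp.trans (Fintype.card_fin n).symm)
  rwa [Fintype.card_fin, ← hypersimplexSections_eq_image] at this

end Sections

theorem stmt16_general (n : ℕ) :
    (∀ S S' : Finset (Fin n),
      hypersimplexSection n S = hypersimplexSection n S' ↔ S' = S ∨ S' = Sᶜ) ∧
    (∀ p : ℕ, 2 * p ≠ n → (hypersimplexSections n p).ncard = n.choose p) ∧
    (n ≠ 0 → n % 2 = 0 →
      (hypersimplexSections n (n / 2)).ncard = n.choose (n / 2) / 2) := by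
  refine ⟨fun _ _ => hypersimplexSection_eq_iff,
    fun _ => ncard_hypersimplexSections_of_two_mul_ne, fun hn heven => ?_⟩
  have := two_mul_ncard_hypersimplexSections hn (Nat.mul_div_cancel' (Nat.dvd_of_mod_eq_zero heven))
  omega

/-- for 2 ≤ |S|, |S'| ≤ n−2, the polytopes
Δ_{n,2} ∩ {∑_{i∈S} x_i = 1} and Δ_{n,2} ∩ {∑_{i∈S'} x_i = 1} coincide iff
S' = S or S' = Sᶜ. Consequently there are C(n,p) such distinct polytopes with
|S| = p for 2 ≤ p < n/2, and C(n, n/2)/2 of them with |S| = n/2 for n even. -/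
theorem stmt16 (n : ℕ) (hn : 4 ≤ n) :
    (∀ S S' : Finset (Fin n), 2 ≤ S.card → S.card ≤ n - 2 →
      2 ≤ S'.card → S'.card ≤ n - 2 →
      ((hypersimplex n 2 ∩ {x | ∑ i ∈ S, x i = 1} =
        hypersimplex n 2 ∩ {x | ∑ i ∈ S', x i = 1}) ↔ (S' = S ∨ S' = Sᶜ))) ∧
    (∀ p : ℕ, 2 ≤ p → 2 * p < n →
      {P : Set (Fin n → ℝ) | ∃ S : Finset (Fin n), S.card = p ∧
        P = hypersimplex n 2 ∩ {x | ∑ i ∈ S, x i = 1}}.ncard = n.choose p) ∧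
    (n % 2 = 0 →
      {P : Set (Fin n → ℝ) | ∃ S : Finset (Fin n), S.card = n / 2 ∧
        P = hypersimplex n 2 ∩ {x | ∑ i ∈ S, x i = 1}}.ncard = n.choose (n / 2) / 2) := by
  obtain ⟨eq_iff, ncard_of_ne, ncard_half⟩ := stmt16_general n
  exact ⟨fun S S' _ _ _ _ => eq_iff S S', fun p _ hp => ncard_of_ne p hp.ne, ncard_half (by omega)⟩
end
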